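/- Fix a model-state pair M,Γ and let i be the object constant identifying Γ in Sta (i.e. I(i) = (v*I)(↓id,Γ)). Let ϱ be a variable and ↓c a relativized concept term with 𝔠(c)=k. Then for any assignment v: v(ϱ) = (v*I)(↓c,Γ) if and only if ⟨v(ϱ), i⟩ ∈ π_{1,2} σ_{1=k+1}(Obj × Sta)(I_M), and moreover π_{1,2} σ_{1=k+1}(Obj × Sta)(I_M) = π_{k,1} Sta(I_M). -/

import Mathlib

namespace KripkeDB

/-- Variable kinds: object variables and concept variables. -/
inductive VKind : Type
  | obj : VKind
  | con : VKind

/-- A first-order modal model: an augmented frame `⟨G, {R_π}, D_o, D_c⟩` together with an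
interpretation `I`.  `State` is the nonempty set of states, `acc r` is the accessibility
relation `R_r` for each relation symbol `r : RelSym`, `Obj` is the nonempty object domain
`D_o`, and the `m` individual concepts (functions from states to objects, `m = |D_c|`)
are indexed by `Fin m` via the bijection `𝔠` (0-based: the concept indexed by `i` has
`𝔠`-value `i+1`).  The concept indexed by `0` is the distinguished concept `id`
(so `𝔠(id) = 1`), whose value uniquely identifies each state.  By the unique names
assumption, constants are identified with the objects/concepts they denote. -/
structure Model where
  State : Type
  state_ne : Nonempty State
  Obj : Type
  obj_ne : Nonempty Obj
  RelSym : Type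
  acc : RelSym → State → State → Prop
  m : ℕ
  m_pos : 0 < m
  concept : Fin m → State → Obj
  id_inj : ∀ Γ Δ : State, concept ⟨0, m_pos⟩ Γ = concept ⟨0, m_pos⟩ Δ → Γ = Δ

/-- Database values: the domain **dom** = D_o ∪ D_c ∪ Π consists of objects,
concept names and accessibility-relation names. -/
abbrev V (M : Model) : Type := M.Obj ⊕ (Fin M.m ⊕ M.RelSym)

/-- The id-value of a state: `(v*I)(↓id, Γ)`. -/
def idval (M : Model) (Γ : M.State) : M.Obj := M.concept ⟨0, M.m_pos⟩ Γ

/-- A relation instance: a set of tuples over the database domain. -/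
abbrev Inst (M : Model) : Type := Set (List (V M))

noncomputable def deflt (M : Model) : V M := Sum.inl (Classical.choice M.obj_ne)

/-- 1-based attribute access `t(j)`. -/
noncomputable def att (M : Model) (t : List (V M)) (j : ℕ) : V M := t.getD (j - 1) (deflt M)

/-- Projection `π_{j₁,…,jₚ}`. -/
noncomputable def proj (M : Model) (js : List ℕ) (I : Inst M) : Inst M :=
  { u | ∃ t ∈ I, u = js.map (att M t) }

/-- Selection `σ_{j=k}` (attribute `j` equals attribute `k`). -/
noncomputable def selEq (M : Model) (j k : ℕ) (I : Inst M) : Inst M :=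
  { t | t ∈ I ∧ att M t j = att M t k }

/-- Selection `σ_{j=c}` (attribute `j` equals the constant `c`). -/
noncomputable def selC (M : Model) (j : ℕ) (c : V M) (I : Inst M) : Inst M :=
  { t | t ∈ I ∧ att M t j = c }

/-- Cross product `I × J`. -/
def cprod (M : Model) (I J : Inst M) : Inst M :=
  { l | ∃ t ∈ I, ∃ u ∈ J, l = t ++ u }

/-- The `Sta`-tuple of a state `Γ`: its `i`-th entry is the value at `Γ` of the concept
with `𝔠`-value `i`. -/
def staTuple (M : Model) (Γ : M.State) : List (V M) :=
  List.ofFn (fun i : Fin M.m => Sum.inl (M.concept i Γ))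

/-- The instance of the relation `Sta` in the database instance `I_M` associated with `M`. -/
def Sta (M : Model) : Inst M := { l | ∃ Γ : M.State, l = staTuple M Γ }

/-- The instance of the unary relation `Obj` (instance `D_o`) in `I_M`. -/
def ObjI (M : Model) : Inst M := { l | ∃ o : M.Obj, l = [Sum.inl o] }

/-- The instance of the unary relation `Con` (instance `D_c`) in `I_M`. -/
def ConI (M : Model) : Inst M := { l | ∃ c : Fin M.m, l = [Sum.inr (Sum.inl c)] }

/-- The instance of the ternary relation `Rel` in `I_M`: it contains `⟨a,b,π⟩` iff
`R_π(Γ,Δ)` where `a,b` are the id-values of `Γ,Δ`. -/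
def RelI (M : Model) : Inst M :=
  { l | ∃ (r : M.RelSym) (Γ Δ : M.State), M.acc r Γ Δ ∧
      l = [Sum.inl (idval M Γ), Sum.inl (idval M Δ), Sum.inr (Sum.inr r)] }

/-- Membership of a database value in the domain of a variable kind
(`D_o` for object variables, `D_c` for concept variables). -/
def kindOk (M : Model) : VKind → V M → Prop
  | VKind.obj, x => ∃ o : M.Obj, x = Sum.inl o
  | VKind.con, x => ∃ c : Fin M.m, x = Sum.inr (Sum.inl c)

/-- `VT(ϱ₁,…,ϱₙ)`: the cross product `D₁ × … × Dₙ` of the domain relations, where `Dᵢ`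
is `Con` for a concept variable and `Obj` for an object variable
(for the empty list this is `{⟨⟩}`). -/
def VTl (M : Model) (ks : List VKind) : Inst M :=
  { l | List.Forall₂ (kindOk M) ks l }

/-- Object terms: object constants (identified with objects via unique names),
object variables (de Bruijn index `k` denotes the variable `ϱ_{k+1}`), and
relativized concept terms `↓c` for a concept constant `c`. -/
inductive OTm (M : Model) : Type
  | const : M.Obj → OTm M
  | var : ℕ → OTm M
  | down : Fin M.m → OTm M

/-- Term evaluation `(v*I)(·, Γ)`. -/
def teval (M : Model) (v : ℕ → V M) (Γ : M.State) : OTm M → V M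
  | OTm.const o => Sum.inl o
  | OTm.var k => v k
  | OTm.down c => Sum.inl (M.concept c Γ)

/-- The result of the term translation `TT`: an attribute index or a constant. -/
inductive TTRes (M : Model) : Type
  | idx : ℕ → TTRes M
  | con : V M → TTRes M

/-- The term translation `TT` with `n` variables in scope: `TT(c) = 'c'` for an object
constant, `TT(ϱ_k) = k`, and `TT(↓t) = n + 𝔠(t)` for a relativized term. -/
def TT (M : Model) (n : ℕ) : OTm M → TTRes M
  | OTm.const o => TTRes.con (Sum.inl o)
  | OTm.var k => TTRes.idx (k + 1)
  | OTm.down c => TTRes.idx (n + (c.val + 1))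

/-- The value in tuple `t` designated by a `TT`-result. -/
noncomputable def ttval (M : Model) (t : List (V M)) : TTRes M → V M
  | TTRes.idx j => att M t j
  | TTRes.con c => c

/-- Generalized selection `σ_{a=b}` where each side is an attribute index or a constant. -/
noncomputable def selT (M : Model) (a b : TTRes M) (I : Inst M) : Inst M :=
  { t | t ∈ I ∧ ttval M t a = ttval M t b }

/-- Generalized selection `σ_{a≠b}`. -/
noncomputable def selTne (M : Model) (a b : TTRes M) (I : Inst M) : Inst M :=
  { t | t ∈ I ∧ ttval M t a ≠ ttval M t b }

/-- The set of (indices of) variables occurring in a term. -/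
def tvars (M : Model) : OTm M → Set ℕ
  | OTm.var k => {k}
  | _ => ∅

/-- Formulas of the modal language.  Binders (`ex`, `all`, `lam`) bind the de Bruijn
variable `0`; in `⟨λϱ.φ⟩(↓c)` the abstracted variable is an object variable and the
argument term is the relativized concept term `↓c`. -/
inductive Fma (M : Model) : Type
  | eq : OTm M → OTm M → Fma M
  | ne : OTm M → OTm M → Fma M
  | not : Fma M → Fma M
  | and : Fma M → Fma M → Fma M
  | or : Fma M → Fma M → Fma M
  | dia : M.RelSym → Fma M → Fma M
  | box : M.RelSym → Fma M → Fma M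
  | ex : VKind → Fma M → Fma M
  | all : VKind → Fma M → Fma M
  | lam : Fin M.m → Fma M → Fma M

/-- Extending an assignment with a value for the freshly bound variable. -/
def consA (M : Model) (d : V M) (v : ℕ → V M) : ℕ → V M
  | 0 => d
  | k + 1 => v k

/-- Truth in a model: `M,Γ ⊩_v φ`. -/
def Truth (M : Model) : M.State → (ℕ → V M) → Fma M → Prop
  | Γ, v, Fma.eq t₁ t₂ => teval M v Γ t₁ = teval M v Γ t₂
  | Γ, v, Fma.ne t₁ t₂ => teval M v Γ t₁ ≠ teval M v Γ t₂
  | Γ, v, Fma.not φ => ¬ Truth M Γ v φ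
  | Γ, v, Fma.and φ ψ => Truth M Γ v φ ∧ Truth M Γ v ψ
  | Γ, v, Fma.or φ ψ => Truth M Γ v φ ∨ Truth M Γ v ψ
  | Γ, v, Fma.dia r φ => ∃ Δ : M.State, M.acc r Γ Δ ∧ Truth M Δ v φ
  | Γ, v, Fma.box r φ => ∀ Δ : M.State, M.acc r Γ Δ → Truth M Δ v φ
  | Γ, v, Fma.ex k φ => ∃ d : V M, kindOk M k d ∧ Truth M Γ (consA M d v) φ
  | Γ, v, Fma.all k φ => ∀ d : V M, kindOk M k d → Truth M Γ (consA M d v) φ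
  | Γ, v, Fma.lam c φ => Truth M Γ (consA M (Sum.inl (M.concept c Γ)) v) φ

/-- The translation `FT` of modal queries into relational algebra queries, evaluated on
`I_M`.  `ks` is the list of kinds of the free variables `ϱ₁,…,ϱₙ` (so `n = ks.length`).
The box clause is `FT([π]φ) = FT(¬⟨π⟩¬φ)`, written out. -/
noncomputable def FT (M : Model) : List VKind → Fma M → Inst M
  | ks, Fma.eq t₁ t₂ =>
      proj M (List.range' 1 (ks.length + 1))
        (selT M (TT M ks.length t₁) (TT M ks.length t₂) (cprod M (VTl M ks) (Sta M)))
  | ks, Fma.ne t₁ t₂ =>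
      proj M (List.range' 1 (ks.length + 1))
        (selTne M (TT M ks.length t₁) (TT M ks.length t₂) (cprod M (VTl M ks) (Sta M)))
  | ks, Fma.not φ =>
      cprod M (VTl M ks) (proj M [1] (Sta M)) \ FT M ks φ
  | ks, Fma.and φ ψ => FT M ks φ ∩ FT M ks ψ
  | ks, Fma.or φ ψ => FT M ks φ ∪ FT M ks ψ
  | ks, Fma.dia r φ =>
      proj M (List.range' 1 ks.length ++ [ks.length + 2])
        (selC M (ks.length + 4) (Sum.inr (Sum.inr r))
          (selEq M (ks.length + 1) (ks.length + 3) (cprod M (FT M ks φ) (RelI M))))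
  | ks, Fma.box r φ =>
      cprod M (VTl M ks) (proj M [1] (Sta M)) \
        proj M (List.range' 1 ks.length ++ [ks.length + 2])
          (selC M (ks.length + 4) (Sum.inr (Sum.inr r))
            (selEq M (ks.length + 1) (ks.length + 3)
              (cprod M (cprod M (VTl M ks) (proj M [1] (Sta M)) \ FT M ks φ) (RelI M))))
  | ks, Fma.ex k φ =>
      proj M (List.range' 2 (ks.length + 1)) (FT M (k :: ks) φ)
  | ks, Fma.all k φ =>
      proj M (List.range' 2 (ks.length + 1)) (FT M (k :: ks) φ) \
        proj M (List.range' 2 (ks.length + 1))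
          (cprod M (VTl M [k]) (proj M (List.range' 2 (ks.length + 1)) (FT M (k :: ks) φ)) \
            FT M (k :: ks) φ)
  | ks, Fma.lam c φ =>
      proj M (List.range' 2 (ks.length + 1))
        (selEq M 1 (ks.length + 3)
          (selEq M (ks.length + 2) (ks.length + 4)
            (cprod M (FT M (VKind.obj :: ks) φ) (proj M [c.val + 1, 1] (Sta M)))))

/-- Well-formedness of a term in a context of variable kinds. -/
def WFt (M : Model) (ks : List VKind) : OTm M → Prop
  | OTm.const _ => True
  | OTm.var k => ks[k]? = some VKind.obj
  | OTm.down _ => True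

/-- Well-formedness of a formula in a context of variable kinds: a modal query
`φ(ϱ₁,…,ϱₙ)` is a well-formed formula whose free variables are among `ϱ₁,…,ϱₙ`. -/
def WF (M : Model) : List VKind → Fma M → Prop
  | ks, Fma.eq t₁ t₂ => WFt M ks t₁ ∧ WFt M ks t₂
  | ks, Fma.ne t₁ t₂ => WFt M ks t₁ ∧ WFt M ks t₂
  | ks, Fma.not φ => WF M ks φ
  | ks, Fma.and φ ψ => WF M ks φ ∧ WF M ks ψ
  | ks, Fma.or φ ψ => WF M ks φ ∧ WF M ks ψ
  | ks, Fma.dia _ φ => WF M ks φ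
  | ks, Fma.box _ φ => WF M ks φ
  | ks, Fma.ex k φ => WF M (k :: ks) φ
  | ks, Fma.all k φ => WF M (k :: ks) φ
  | ks, Fma.lam _ φ => WF M (VKind.obj :: ks) φ

/-- An assignment conforms to a context of kinds if it maps object variables into `D_o`
and concept variables into `D_c`. -/
def Conf (M : Model) (ks : List VKind) (v : ℕ → V M) : Prop :=
  ∀ k : Fin ks.length, kindOk M (ks.get k) (v k)

section

variable {M : Model}

theorem att_cons_one (a : V M) (t : List (V M)) : att M (a :: t) 1 = a :=
  rfl

-- Truncated subtraction makes `att M t 0` coincide with `att M t 1`.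
theorem att_cons_succ (a : V M) (t : List (V M)) {j : ℕ} (hj : j ≠ 0) :
    att M (a :: t) (j + 1) = att M t j := by
  obtain ⟨n, rfl⟩ := Nat.exists_eq_succ_of_ne_zero hj
  simp [att]

theorem att_staTuple (Γ : M.State) (c : Fin M.m) :
    att M (staTuple M Γ) (c.val + 1) = Sum.inl (M.concept c Γ) := by
  simp [att, staTuple]

theorem att_staTuple_one (Γ : M.State) : att M (staTuple M Γ) 1 = Sum.inl (idval M Γ) :=
  att_staTuple Γ ⟨0, M.m_pos⟩

theorem proj_eq_image (js : List ℕ) (J : Inst M) :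
    proj M js J = (fun t => js.map (att M t)) '' J := by
  simp only [proj, Set.image, eq_comm]

theorem selEq_one_succ_cprod_ObjI {J : Inst M} {k : ℕ} (hk : k ≠ 0)
    (hJ : ∀ t ∈ J, ∃ o : M.Obj, att M t k = Sum.inl o) :
    selEq M 1 (k + 1) (cprod M (ObjI M) J) = (fun t => att M t k :: t) '' J := by
  ext l
  constructor
  · rintro ⟨⟨_, ⟨o, rfl⟩, t, ht, rfl⟩, hsel⟩
    have hcol : Sum.inl o = att M t k := hsel.trans (att_cons_succ _ t hk)
    exact ⟨t, ht, congrArg (· :: t) hcol.symm⟩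
  · rintro ⟨t, ht, rfl⟩
    obtain ⟨o, ho⟩ := hJ t ht
    exact ⟨⟨[att M t k], ⟨o, congrArg ([·]) ho⟩, t, ht, rfl⟩, (att_cons_succ _ t hk).symm⟩

theorem proj_selEq_one_succ_cprod_ObjI {J : Inst M} {k : ℕ} (hk : k ≠ 0)
    (hJ : ∀ t ∈ J, ∃ o : M.Obj, att M t k = Sum.inl o) {js : List ℕ} (hjs : ∀ j ∈ js, j ≠ 0) :
    proj M (1 :: js.map (· + 1)) (selEq M 1 (k + 1) (cprod M (ObjI M) J)) =
      proj M (k :: js) J := by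
  rw [selEq_one_succ_cprod_ObjI hk hJ, proj_eq_image, proj_eq_image, Set.image_image]
  refine Set.image_congr fun t _ => ?_
  rw [List.map_cons, List.map_cons, List.map_map, att_cons_one]
  exact congrArg _ (List.map_congr_left fun j hj => att_cons_succ _ t (hjs j hj))

theorem idval_injective : Function.Injective (idval M) :=
  M.id_inj

theorem proj_concept_id_Sta (c : Fin M.m) :
    proj M [c.val + 1, 1] (Sta M) =
      Set.range fun Γ => [Sum.inl (M.concept c Γ), Sum.inl (idval M Γ)] := by
  have hSta : Sta M = Set.range (staTuple M) := by
    simp only [Sta, Set.range, eq_comm]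
  rw [hSta, proj_eq_image, ← Set.range_comp]
  refine congrArg Set.range (funext fun Γ => ?_)
  simp only [Function.comp_apply, List.map_cons, List.map_nil, att_staTuple, att_staTuple_one]

theorem mem_proj_concept_id_Sta_iff (c : Fin M.m) (o : M.Obj) (Γ : M.State) :
    [Sum.inl o, Sum.inl (idval M Γ)] ∈ proj M [c.val + 1, 1] (Sta M) ↔ o = M.concept c Γ := by
  rw [proj_concept_id_Sta]
  constructor
  · rintro ⟨Δ, hΔ⟩
    simp only [List.cons.injEq, Sum.inl.injEq, and_true] at hΔ
    obtain ⟨hval, hid⟩ := hΔ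
    rw [← hval, idval_injective hid]
  · rintro rfl
    exact ⟨Γ, rfl⟩

theorem proj_selEq_cprod_ObjI_Sta (c : Fin M.m) :
    proj M [1, 2] (selEq M 1 (c.val + 1 + 1) (cprod M (ObjI M) (Sta M))) =
      proj M [c.val + 1, 1] (Sta M) := by
  have hObj : ∀ t ∈ Sta M, ∃ o : M.Obj, att M t (c.val + 1) = Sum.inl o := by
    rintro _ ⟨Γ, rfl⟩
    exact ⟨M.concept c Γ, att_staTuple Γ c⟩
  exact proj_selEq_one_succ_cprod_ObjI (js := [1]) c.val.succ_ne_zero hObj (by simp)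

end

/-- Fix a model-state pair `M,Γ` and let `i` be the object constant
identifying `Γ` in `Sta` (`I(i) = (v*I)(↓id,Γ)`).  Let `ϱ` be an (object) variable and
`↓c` a relativized concept term with `𝔠(c) = k`.  Then for any assignment `v`:
`v(ϱ) = (v*I)(↓c,Γ)` iff `⟨v(ϱ), i⟩ ∈ π_{1,2} σ_{1=k+1}(Obj × Sta)(I_M)`, and moreover
`π_{1,2} σ_{1=k+1}(Obj × Sta)(I_M) = π_{k,1} Sta(I_M)`. -/
theorem var_relativized_case (M : Model) (Γ : M.State) (c : Fin M.m) (k : ℕ)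
    (hk : k = c.val + 1) (i : M.Obj) (hi : i = idval M Γ) :
    (∀ (v : ℕ → M.Obj) (ϱ : ℕ),
      ((Sum.inl (v ϱ) : V M) = teval M (fun j => Sum.inl (v j)) Γ (OTm.down c) ↔
        ([Sum.inl (v ϱ), Sum.inl i] : List (V M)) ∈
          proj M [1, 2] (selEq M 1 (k + 1) (cprod M (ObjI M) (Sta M)))))
    ∧ proj M [1, 2] (selEq M 1 (k + 1) (cprod M (ObjI M) (Sta M))) =
        proj M [k, 1] (Sta M) := by
  subst hk hi
  refine ⟨fun v ϱ => ?_, proj_selEq_cprod_ObjI_Sta c⟩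
  rw [proj_selEq_cprod_ObjI_Sta, mem_proj_concept_id_Sta_iff]
  exact Sum.inl_injective.eq_iff

end KripkeDB
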